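/- Let n ≥ 1 and let f be an integrable function on ℝ^n. Then ∫_{ℝ^n} Ψ(x, M^loc f(x)) dx < ∞ (i.e., M^loc f belongs to L_log(ℝ^n)) if and only if ∫_{ℝ^n} |f(x)| ( 1 + ln₊( ln(e+|f(x)|) / ln(e+|x|) ) ) dx < ∞. -/

import Mathlib

open MeasureTheory Real Set Metric ENNReal

noncomputable section

/-- `ℝ^n` with the Euclidean norm. -/
abbrev En (n : ℕ) := EuclideanSpace ℝ (Fin n)

/-- `ln₊ t = max (ln t) 0`. -/
def lnp (t : ℝ) : ℝ := max (Real.log t) 0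

/-- The unit cube `Q = (-1/2, 1/2)^n`. -/
def unitQ (n : ℕ) : Set (En n) := {x | ∀ i, -(1/2 : ℝ) < x i ∧ x i < 1/2}

/-- The dilate `φ_t(y) = t^{-n} φ(y/t)` convolved with `f` at `x`:
`(φ_t ∗ f)(x) = ∫ t^{-n} φ((x-y)/t) f(y) dy`. -/
def phiConv (n : ℕ) (φ f : En n → ℝ) (t : ℝ) (x : En n) : ℝ :=
  ∫ y, (t ^ n)⁻¹ * φ (t⁻¹ • (x - y)) * f y

/-- The maximal function `𝓜_φ f(x) = sup_{t>0} |(φ_t ∗ f)(x)|`. -/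
def Mphi (n : ℕ) (φ f : En n → ℝ) (x : En n) : ℝ :=
  ⨆ t : {t : ℝ // 0 < t}, |phiConv n φ f t.1 x|

/-- A smooth function supported in the closed unit ball with integral `1`. -/
def IsTestFun (n : ℕ) (φ : En n → ℝ) : Prop :=
  ContDiff ℝ (⊤ : ℕ∞) φ ∧ (∀ x, x ∉ Metric.closedBall (0 : En n) 1 → φ x = 0) ∧ (∫ x, φ x) = 1

/-- Membership in the Hardy space `H^1(ℝ^n)`: the maximal function `𝓜_φ f` is
integrable for every admissible `φ`. -/
def MemH1 (n : ℕ) (f : En n → ℝ) : Prop :=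
  ∀ φ : En n → ℝ, IsTestFun n φ → Integrable (Mphi n φ f)

/-- The cube `Q_k = k + Q` for `k ∈ ℤ^n`. -/
def Qk (n : ℕ) (k : Fin n → ℤ) : Set (En n) :=
  {x | ∀ i, (k i : ℝ) - 1/2 < x i ∧ x i < (k i : ℝ) + 1/2}

/-- The lattice point `k ∈ ℤ^n` viewed as a point of `ℝ^n`. -/
def zv (n : ℕ) (k : Fin n → ℤ) : En n :=
  (EuclideanSpace.equiv (Fin n) ℝ).symm (fun i => (k i : ℝ))

/-- `μ_k = ‖f_k‖_{L^1} = ∫_{Q_k} |f|`. -/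
def muk (n : ℕ) (f : En n → ℝ) (k : Fin n → ℤ) : ℝ := ∫ x in Qk n k, |f x|

/-- The local Hardy–Littlewood maximal function
`M^loc f(x) = sup_{0<r<1} r^{-n} ∫_{|y-x|<r} |f(y)| dy`. -/
def Mloc (n : ℕ) (f : En n → ℝ) (x : En n) : ℝ :=
  ⨆ r : Set.Ioo (0 : ℝ) 1, ((r : ℝ) ^ n)⁻¹ * ∫ y in Metric.ball x (r : ℝ), |f y|

/-- The Musielak function `Ψ(x,t) = t / (ln(e+t) + ln(e+|x|))` defining `L_log`. -/
def Psi (n : ℕ) (x : En n) (t : ℝ) : ℝ :=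
  t / (Real.log (Real.exp 1 + t) + Real.log (Real.exp 1 + ‖x‖))

theorem cover_lem {n : ℕ} (a b w1 w2 : En n → ℝ≥0∞) (ha : Measurable a) (hb : Measurable b)
    (K : ℝ≥0∞) (hK : K ≠ ⊤) (hw : ∀ y z, dist y z ≤ 6 → w1 y ≤ K * w2 z) (E : Set (En n)) (r : En n → ℝ)
    (hr : ∀ x ∈ E, 0 < r x ∧ r x ≤ 1)
    (h : ∀ x ∈ E, ∫⁻ y in closedBall x (5 * r x), a y ≤ ∫⁻ y in closedBall x (r x), b y) :
    ∫⁻ y in E, a y * w1 y ≤ K * ∫⁻ y, b y * w2 y := by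
  obtain ⟨u, huE, hdis, hcov⟩ := Vitali.exists_disjoint_subfamily_covering_enlargement_closedBall
    E (fun x => x) r 1 (fun x hx => (hr x hx).2) 5 (by norm_num)
  have hcount : u.Countable := by
    refine hdis.countable_of_nonempty_interior ?_
    intro x hx
    exact ⟨x, ball_subset_interior_closedBall (mem_ball_self (hr x (huE hx)).1)⟩
  have : Countable u := hcount.to_subtype
  have hsub : E ⊆ ⋃ x : u, closedBall (x : En n) (5 * r x) := by
    intro x hx
    obtain ⟨b, hb, hs⟩ := hcov x hx
    exact mem_iUnion.2 ⟨⟨b, hb⟩, hs (mem_closedBall_self (hr x hx).1.le)⟩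
  have key : ∀ x ∈ u, ∫⁻ y in closedBall x (5 * r x), a y * w1 y ≤
      K * ∫⁻ y in closedBall x (r x), b y * w2 y := by
    intro x hx
    have hx1 := hr x (huE hx)
    set c := ⨆ y ∈ closedBall x (5 * r x), w1 y with hc
    have hcz : ∀ z ∈ closedBall x (r x), c ≤ K * w2 z := by
      intro z hz
      refine iSup₂_le fun y hy => hw y z ?_
      have h1 := mem_closedBall.1 hz
      have h2 := mem_closedBall.1 hy
      have := dist_triangle_right y z x
      linarith
    calc ∫⁻ y in closedBall x (5 * r x), a y * w1 y
        ≤ ∫⁻ y in closedBall x (5 * r x), a y * c := by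
          refine setLIntegral_mono' measurableSet_closedBall fun y hy => ?_
          gcongr
          exact le_iSup₂ (f := fun y (_ : y ∈ closedBall x (5 * r x)) => w1 y) y hy
      _ = (∫⁻ y in closedBall x (5 * r x), a y) * c := lintegral_mul_const _ ha
      _ ≤ (∫⁻ y in closedBall x (r x), b y) * c := mul_le_mul_left (h x (huE hx)) _
      _ = ∫⁻ y in closedBall x (r x), b y * c := (lintegral_mul_const _ hb).symm
      _ ≤ ∫⁻ y in closedBall x (r x), K * (b y * w2 y) := by
          refine setLIntegral_mono' measurableSet_closedBall fun y hy => ?_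
          calc b y * c ≤ b y * (K * w2 y) := by gcongr; exact hcz y hy
            _ = _ := by ring
      _ = K * ∫⁻ y in closedBall x (r x), b y * w2 y := lintegral_const_mul' _ _ hK
  calc ∫⁻ y in E, a y * w1 y ≤ ∫⁻ y in ⋃ x : u, closedBall (x : En n) (5 * r x), a y * w1 y :=
        lintegral_mono_set hsub
    _ ≤ ∑' x : u, ∫⁻ y in closedBall (x : En n) (5 * r x), a y * w1 y := lintegral_iUnion_le _ _
    _ ≤ ∑' x : u, K * ∫⁻ y in closedBall (x : En n) (r x), b y * w2 y :=
        ENNReal.tsum_le_tsum fun x => key x x.2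
    _ = K * ∑' x : u, ∫⁻ y in closedBall (x : En n) (r x), b y * w2 y := ENNReal.tsum_mul_left
    _ = K * ∫⁻ y in ⋃ x ∈ u, closedBall (x : En n) (r x), b y * w2 y := by
        rw [lintegral_biUnion hcount (fun _ _ => measurableSet_closedBall) hdis]
    _ ≤ _ := mul_le_mul_right (setLIntegral_le_lintegral _ _) _

/-- extended-real version of the local maximal function -/
def Me (n : ℕ) (F : En n → ℝ≥0∞) (x : En n) : ℝ≥0∞ :=
  ⨆ r : Set.Ioo (0 : ℝ) 1, ENNReal.ofReal (((r : ℝ) ^ n)⁻¹) * ∫⁻ y in ball x (r : ℝ), F y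

theorem Me_lt {n : ℕ} {F : En n → ℝ≥0∞} {x : En n} {s : ℝ} (hs : 0 ≤ s) :
    ENNReal.ofReal s < Me n F x ↔ ∃ r : ℝ, 0 < r ∧ r < 1 ∧
      ENNReal.ofReal (s * r ^ n) < ∫⁻ y in ball x r, F y := by
  have aux : ∀ r : ℝ, 0 < r → ∀ I : ℝ≥0∞, (ENNReal.ofReal s < ENNReal.ofReal ((r ^ n)⁻¹) * I ↔
      ENNReal.ofReal (s * r ^ n) < I) := by
    intro r hr I
    have hp : 0 < r ^ n := by positivity
    rw [ENNReal.ofReal_inv_of_pos hp, ENNReal.ofReal_mul hs, mul_comm _ I, ← div_eq_mul_inv,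
      ENNReal.lt_div_iff_mul_lt]
    · left; simpa using hp
    · left; simp
  unfold Me
  rw [lt_iSup_iff]
  constructor
  · rintro ⟨r, h⟩
    exact ⟨r, r.2.1, r.2.2, (aux r r.2.1 _).1 h⟩
  · rintro ⟨r, h0, h1, h⟩
    exact ⟨⟨r, h0, h1⟩, (aux r h0 _).2 h⟩

theorem Me_measurable {n : ℕ} {F : En n → ℝ≥0∞} : Measurable (Me n F) := by
  apply LowerSemicontinuous.measurable
  unfold Me
  refine lowerSemicontinuous_iSup fun r => ?_
  intro x c hc
  have hU : (⋃ k : ℕ, ball x ((r : ℝ) - 1 / ((k : ℝ) + 1))) = ball x (r : ℝ) := by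
    ext y
    simp only [mem_iUnion, mem_ball]
    constructor
    · rintro ⟨k, hk⟩
      have : 0 < 1 / ((k : ℝ) + 1) := by positivity
      linarith
    · intro hy
      obtain ⟨k, hk⟩ := exists_nat_one_div_lt (sub_pos.2 hy)
      exact ⟨k, by linarith⟩
  have hmono : Monotone fun k : ℕ => ball x ((r : ℝ) - 1 / ((k : ℝ) + 1)) := by
    intro i j hij
    apply ball_subset_ball
    have : 1 / ((j : ℝ) + 1) ≤ 1 / ((i : ℝ) + 1) := by
      apply one_div_le_one_div_of_le (by positivity)
      have : (i : ℝ) ≤ j := by exact_mod_cast hij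
      linarith
    linarith
  have h1 : ∫⁻ y in ball x (r : ℝ), F y =
      ⨆ k : ℕ, ∫⁻ y in ball x ((r : ℝ) - 1 / ((k : ℝ) + 1)), F y := by
    rw [← hU, setLIntegral_iUnion_of_directed _ hmono.directed_le]
  have hc : c < ENNReal.ofReal (((r : ℝ) ^ n)⁻¹) * ∫⁻ y in ball x (r : ℝ), F y := hc
  rw [h1, ENNReal.mul_iSup, lt_iSup_iff] at hc
  obtain ⟨k, hk⟩ := hc
  have hpos : 0 < 1 / ((k : ℝ) + 1) := by positivity
  filter_upwards [ball_mem_nhds x hpos] with y hy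
  refine hk.trans_le ?_
  gcongr
  intro z hz
  have := mem_ball.1 hz
  have h2 := mem_ball.1 hy
  have := dist_triangle_right z y x
  rw [mem_ball]
  linarith

theorem vol_ball1_pos (n : ℕ) : 0 < volume (ball (0 : En n) 1) := measure_ball_pos _ _ one_pos
theorem vol_ball1_ne_top (n : ℕ) : volume (ball (0 : En n) 1) ≠ ⊤ := measure_ball_lt_top.ne

/-- real volume of the unit ball -/
def vB (n : ℕ) : ℝ := (volume (ball (0 : En n) 1)).toReal

theorem vB_pos (n : ℕ) : 0 < vB n := ENNReal.toReal_pos (vol_ball1_pos n).ne' (vol_ball1_ne_top n)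

theorem vol_cb {n : ℕ} (x : En n) {r : ℝ} (hr : 0 ≤ r) :
    volume (closedBall x r) = ENNReal.ofReal (vB n * r ^ n) := by
  rw [Measure.addHaar_closedBall _ _ hr, mul_comm, ENNReal.ofReal_mul (vB_pos n).le, vB,
    ENNReal.ofReal_toReal (vol_ball1_ne_top n)]
  simp

theorem weak_lem {n : ℕ} {F : En n → ℝ≥0∞} (hF : Measurable F) {s : ℝ} (hs : 0 < s)
    (w1 w2 : En n → ℝ≥0∞) (K : ℝ≥0∞) (hK : K ≠ ⊤)
    (hw : ∀ y z, dist y z ≤ 6 → w1 y ≤ K * w2 z) :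
    ∫⁻ x in {x | ENNReal.ofReal s < Me n F x}, w1 x ≤
      K * ∫⁻ x, (ENNReal.ofReal (2 * 5 ^ n * vB n / s) *
        {y | ENNReal.ofReal (s / (2 * vB n)) < F y}.indicator F x) * w2 x := by
  have hv := vB_pos n
  set S := {y | ENNReal.ofReal (s / (2 * vB n)) < F y} with hS
  have hSm : MeasurableSet S := measurableSet_lt measurable_const hF
  have hex : ∀ x, ∃ r : ℝ, ENNReal.ofReal s < Me n F x → 0 < r ∧ r < 1 ∧
      ENNReal.ofReal (s * r ^ n) < ∫⁻ y in ball x r, F y := by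
    intro x
    by_cases hx : ENNReal.ofReal s < Me n F x
    · obtain ⟨r, hr⟩ := (Me_lt hs.le).1 hx
      exact ⟨r, fun _ => hr⟩
    · exact ⟨0, fun h => absurd h hx⟩
  choose r hr using hex
  have := cover_lem (fun _ => 1) (fun x => ENNReal.ofReal (2 * 5 ^ n * vB n / s) * S.indicator F x)
    w1 w2 measurable_const ((hF.indicator hSm).const_mul _) K hK hw
    {x | ENNReal.ofReal s < Me n F x} r (fun x hx => ⟨(hr x hx).1, (hr x hx).2.1.le⟩) ?_
  · simpa using this
  intro x hx
  obtain ⟨h0, h1, h2⟩ := hr x hx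
  have hp : 0 < r x ^ n := by positivity
  have h3 : ∫⁻ y in ball x (r x), F y ≤
      ENNReal.ofReal (s * r x ^ n / 2) + ∫⁻ y in closedBall x (r x), S.indicator F y := by
    calc ∫⁻ y in ball x (r x), F y ≤ ∫⁻ y in closedBall x (r x), F y :=
          lintegral_mono_set ball_subset_closedBall
      _ ≤ ∫⁻ y in closedBall x (r x), (ENNReal.ofReal (s / (2 * vB n)) + S.indicator F y) := by
          refine lintegral_mono fun y => ?_
          by_cases hy : y ∈ S
          · simp [hy]
          · simp only [hy, not_false_eq_true, indicator_of_notMem, add_zero]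
            exact not_lt.1 hy
      _ = _ := by
          rw [lintegral_add_left measurable_const, setLIntegral_const, vol_cb x h0.le,
            ← ENNReal.ofReal_mul (by positivity)]
          congr 2
          field_simp
  have h4 : ENNReal.ofReal (s * r x ^ n / 2) ≤ ∫⁻ y in closedBall x (r x), S.indicator F y := by
    by_contra hcon
    push Not at hcon
    have := h2.trans_le h3
    have h5 : ENNReal.ofReal (s * r x ^ n) =
      ENNReal.ofReal (s * r x ^ n / 2) + ENNReal.ofReal (s * r x ^ n / 2) := by
      rw [← ENNReal.ofReal_add (by positivity) (by positivity)]; congr 1; ring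
    rw [h5] at this
    exact absurd this (not_lt.2 (by gcongr))
  rw [setLIntegral_one, vol_cb x (by positivity), lintegral_const_mul _ (hF.indicator hSm)]
  calc ENNReal.ofReal (vB n * (5 * r x) ^ n)
      = ENNReal.ofReal (2 * 5 ^ n * vB n / s) * ENNReal.ofReal (s * r x ^ n / 2) := by
        rw [← ENNReal.ofReal_mul (by positivity)]
        congr 1
        rw [mul_pow]; field_simp
    _ ≤ _ := by gcongr

theorem Me_lt_top {n : ℕ} {F : En n → ℝ≥0∞} (hF : Measurable F) (hI : ∫⁻ x, F x ≠ ⊤) :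
    ∀ᵐ x, Me n F x < ⊤ := by
  have hb : ∀ k : ℕ, volume {x | Me n F x = ⊤} ≤
      ENNReal.ofReal (2 * 5 ^ n * vB n / ((k : ℝ) + 1)) * ∫⁻ x, F x := by
    intro k
    have hk : (0 : ℝ) < (k : ℝ) + 1 := by positivity
    have := weak_lem hF hk (fun _ => 1) (fun _ => 1) 1 (by simp) (by simp)
    rw [setLIntegral_one] at this
    refine (measure_mono ?_).trans (this.trans ?_)
    · intro x hx
      have hx' : Me n F x = ⊤ := hx
      simp [hx']
    · rw [one_mul, ← lintegral_const_mul _ hF]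
      refine lintegral_mono fun x => ?_
      rw [mul_one]
      gcongr
      exact indicator_le_self _ _ _
  have ht : Filter.Tendsto (fun k : ℕ => ENNReal.ofReal (2 * 5 ^ n * vB n / ((k : ℝ) + 1)) * ∫⁻ x, F x)
      Filter.atTop (nhds (ENNReal.ofReal 0 * ∫⁻ x, F x)) := by
    refine ENNReal.Tendsto.mul_const ?_ (Or.inr hI)
    refine ENNReal.tendsto_ofReal ?_
    have := (tendsto_one_div_add_atTop_nhds_zero_nat (𝕜 := ℝ)).const_mul (2 * 5 ^ n * vB n)
    simpa [div_eq_mul_inv] using this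
  have h0 := ge_of_tendsto' ht hb
  rw [ae_iff]
  simpa using h0

theorem lint_le {a b : ℝ} (hab : a ≤ b) {g g' φ : ℝ → ℝ}
    (hd : ∀ x ∈ Icc a b, HasDerivAt g (g' x) x) (hφ : ContinuousOn φ (Icc a b))
    (h0 : ∀ x ∈ Icc a b, 0 ≤ φ x) (hle : ∀ x ∈ Icc a b, φ x ≤ g' x) :
    ∫⁻ s in Ioc a b, ENNReal.ofReal (φ s) ≤ ENNReal.ofReal (g b - g a) := by
  have hint : IntegrableOn φ (Icc a b) := hφ.integrableOn_compact isCompact_Icc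
  rw [← ofReal_integral_eq_lintegral_ofReal (hint.mono_set Ioc_subset_Icc_self)
    ((ae_restrict_iff' measurableSet_Ioc).2 (.of_forall fun x hx => h0 x (Ioc_subset_Icc_self hx))),
    ← intervalIntegral.integral_of_le hab]
  refine ENNReal.ofReal_le_ofReal ?_
  exact intervalIntegral.integral_le_sub_of_hasDeriv_right_of_le hab
    (fun x hx => (hd x hx).continuousAt.continuousWithinAt)
    (fun x hx => (hd x (Ioo_subset_Icc_self hx)).hasDerivWithinAt) hint
    (fun x hx => hle x (Ioo_subset_Icc_self hx))

theorem le_lint {a b : ℝ} (hab : a ≤ b) {g g' φ : ℝ → ℝ}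
    (hd : ∀ x ∈ Icc a b, HasDerivAt g (g' x) x) (hφ : ContinuousOn φ (Icc a b))
    (h0 : ∀ x ∈ Icc a b, 0 ≤ φ x) (hle : ∀ x ∈ Icc a b, g' x ≤ φ x) :
    ENNReal.ofReal (g b - g a) ≤ ∫⁻ s in Ioc a b, ENNReal.ofReal (φ s) := by
  have hint : IntegrableOn φ (Icc a b) := hφ.integrableOn_compact isCompact_Icc
  rw [← ofReal_integral_eq_lintegral_ofReal (hint.mono_set Ioc_subset_Icc_self)
    ((ae_restrict_iff' measurableSet_Ioc).2 (.of_forall fun x hx => h0 x (Ioc_subset_Icc_self hx))),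
    ← intervalIntegral.integral_of_le hab]
  refine ENNReal.ofReal_le_ofReal ?_
  exact intervalIntegral.sub_le_integral_of_hasDeriv_right_of_le hab
    (fun x hx => (hd x hx).continuousAt.continuousWithinAt)
    (fun x hx => (hd x (Ioo_subset_Icc_self hx)).hasDerivWithinAt) hint
    (fun x hx => hle x (Ioo_subset_Icc_self hx))

theorem log_e_ge {s : ℝ} (hs : 0 ≤ s) : 1 ≤ Real.log (Real.exp 1 + s) := by
  rw [Real.le_log_iff_exp_le (by positivity)]; linarith

theorem hasDeriv_loge {s : ℝ} (hs : 0 ≤ s) (L : ℝ) :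
    HasDerivAt (fun s => Real.log (Real.exp 1 + s) + L) (1 / (Real.exp 1 + s)) s := by
  have h1 : HasDerivAt (fun s => Real.exp 1 + s) 1 s := (hasDerivAt_id s).const_add _
  exact (h1.log (by positivity)).add_const L

theorem calc_lower_psi {T L : ℝ} (hT : 0 ≤ T) (hL : 1 ≤ L) :
    ENNReal.ofReal (T / (Real.log (Real.exp 1 + T) + L)) ≤
      ∫⁻ s in Ioo 0 T, ENNReal.ofReal (1 / (Real.log (Real.exp 1 + s) + L)) := by
  calc ENNReal.ofReal (T / (Real.log (Real.exp 1 + T) + L))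
      = ∫⁻ s in Ioo 0 T, ENNReal.ofReal (1 / (Real.log (Real.exp 1 + T) + L)) := by
        have := log_e_ge hT
        rw [setLIntegral_const, Real.volume_Ioo, ← ENNReal.ofReal_mul (by positivity)]
        congr 1; ring
    _ ≤ _ := by
        refine setLIntegral_mono' measurableSet_Ioo fun s hs => ?_
        have := log_e_ge hs.1.le
        have := hs.1
        have := hs.2
        gcongr

theorem calc_upper_psi {T L : ℝ} (hT : 0 ≤ T) (hL : 1 ≤ L) :
    ∫⁻ s in Ioc 0 T, ENNReal.ofReal (1 / (Real.log (Real.exp 1 + s) + L)) ≤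
      ENNReal.ofReal (2 * (T / (Real.log (Real.exp 1 + T) + L))) := by
  have := lint_le (a := 0) (b := T) hT (g := fun s => 2 * (s / (Real.log (Real.exp 1 + s) + L)))
    (g' := fun s => 2 * ((1 * (Real.log (Real.exp 1 + s) + L) - s * (1 / (Real.exp 1 + s))) /
      (Real.log (Real.exp 1 + s) + L) ^ 2))
    (φ := fun s => 1 / (Real.log (Real.exp 1 + s) + L)) ?_ ?_ ?_ ?_
  · simpa using this
  · intro s hs
    have h1 := log_e_ge hs.1
    exact ((hasDerivAt_id s).div (hasDeriv_loge hs.1 L) (by positivity)).const_mul 2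
  · intro s hs
    have h1 := log_e_ge hs.1
    exact (continuousAt_const.div (hasDeriv_loge hs.1 L).continuousAt
      (by positivity)).continuousWithinAt
  · intro s hs
    have h1 := log_e_ge hs.1
    positivity
  · intro s hs
    have h1 := log_e_ge hs.1
    set D := Real.log (Real.exp 1 + s) + L with hD
    have hD2 : 2 ≤ D := by linarith
    have h2 : s * (1 / (Real.exp 1 + s)) ≤ 1 := by
      rw [mul_one_div, div_le_one (by have := hs.1; positivity)]
      have := Real.exp_pos 1
      linarith
    rw [← mul_div_assoc, div_le_div_iff₀ (by positivity) (by positivity)]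
    nlinarith

theorem cont_phi {s L : ℝ} (h0 : 0 < s) (hL : 1 ≤ L) :
    ContinuousAt (fun s => 1 / (s * (Real.log (Real.exp 1 + s) + L))) s := by
  have h1 := log_e_ge h0.le
  exact (continuousAt_const.div (continuousAt_id.mul (hasDeriv_loge h0.le L).continuousAt)
        (mul_ne_zero h0.ne' (by positivity)))

theorem calc_a {a L : ℝ} (ha : 0 < a) (hL : 1 ≤ L) :
    ∫⁻ s in Ioc a 1, ENNReal.ofReal (1 / (s * (Real.log (Real.exp 1 + s) + L))) ≤
      ENNReal.ofReal (Real.log (1 / a) / L) := by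
  rcases le_or_gt a 1 with h | h
  · have := lint_le h (g := fun s => Real.log s / L) (g' := fun s => s⁻¹ / L)
      (φ := fun s => 1 / (s * (Real.log (Real.exp 1 + s) + L))) ?_ ?_ ?_ ?_
    · refine this.trans (ENNReal.ofReal_le_ofReal ?_)
      simp [neg_div]
    · intro s hs
      exact (Real.hasDerivAt_log (ha.trans_le hs.1).ne').div_const L
    · intro s hs
      have h0 := ha.trans_le hs.1
      exact (cont_phi h0 hL).continuousWithinAt
    · intro s hs
      have h0 := ha.trans_le hs.1
      have h1 := log_e_ge h0.le
      positivity
    · intro s hs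
      have h0 := ha.trans_le hs.1
      have h1 := log_e_ge h0.le
      have : s⁻¹ / L = 1 / (s * L) := by field_simp
      simp only [this]
      gcongr
      linarith
  · rw [Ioc_eq_empty (by linarith)]; simp

theorem hasDeriv_loglog {s L : ℝ} (hs : 0 ≤ s) (hL : 1 ≤ L) :
    HasDerivAt (fun s => Real.log (Real.log (Real.exp 1 + s) + L))
      (1 / (Real.exp 1 + s) / (Real.log (Real.exp 1 + s) + L)) s := by
  have h1 := log_e_ge hs
  exact (hasDeriv_loge hs L).log (by positivity)

theorem calc_b {b L : ℝ} (hb : 1 ≤ b) (hL : 1 ≤ L) :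
    ∫⁻ s in Ioc 1 b, ENNReal.ofReal (1 / (s * (Real.log (Real.exp 1 + s) + L))) ≤
      ENNReal.ofReal (4 * Real.log (Real.log (Real.exp 1 + b) + L) -
        4 * Real.log (Real.log (Real.exp 1 + 1) + L)) := by
  refine lint_le hb (g := fun s => 4 * Real.log (Real.log (Real.exp 1 + s) + L))
    (g' := fun s => 4 * (1 / (Real.exp 1 + s) / (Real.log (Real.exp 1 + s) + L)))
      (φ := fun s => 1 / (s * (Real.log (Real.exp 1 + s) + L))) ?_ ?_ ?_ ?_
  · intro s hs
    exact (hasDeriv_loglog (zero_le_one.trans hs.1) hL).const_mul 4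
  · intro s hs
    exact (cont_phi (zero_lt_one.trans_le hs.1) hL).continuousWithinAt
  · intro s hs
    have h0 := zero_lt_one.trans_le hs.1
    have h1 := log_e_ge h0.le
    positivity
  · intro s hs
    have h0 := zero_lt_one.trans_le hs.1
    have h1 := log_e_ge h0.le
    have he := Real.exp_one_lt_d9
    have h11 := hs.1
    rw [div_div, mul_one_div, div_le_div_iff₀ (by positivity) (by positivity)]
    have : Real.exp 1 + s ≤ 4 * s := by linarith
    nlinarith [mul_le_mul_of_nonneg_right this (by positivity : 0 ≤ Real.log (Real.exp 1 + s) + L)]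

theorem calc_lower_ll {A b L : ℝ} (hA : 0 < A) (hb : A ≤ b) (hL : 1 ≤ L) :
    ENNReal.ofReal (Real.log (Real.log (Real.exp 1 + b) + L) -
        Real.log (Real.log (Real.exp 1 + A) + L)) ≤
    ∫⁻ s in Ioc A b, ENNReal.ofReal (1 / (s * (Real.log (Real.exp 1 + s) + L))) := by
  refine le_lint hb (g := fun s => Real.log (Real.log (Real.exp 1 + s) + L))
    (g' := fun s => (1 / (Real.exp 1 + s) / (Real.log (Real.exp 1 + s) + L)))
      (φ := fun s => 1 / (s * (Real.log (Real.exp 1 + s) + L))) ?_ ?_ ?_ ?_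
  · intro s hs
    exact (hasDeriv_loglog (hA.le.trans hs.1) hL)
  · intro s hs
    exact (cont_phi (hA.trans_le hs.1) hL).continuousWithinAt
  · intro s hs
    have h0 := hA.trans_le hs.1
    have h1 := log_e_ge h0.le
    positivity
  · intro s hs
    have h0 := hA.trans_le hs.1
    have h1 := log_e_ge h0.le
    rw [div_div]
    gcongr
    have := Real.exp_pos 1
    linarith

theorem lnp_nonneg (t : ℝ) : 0 ≤ lnp t := le_max_right _ _

theorem calc_upper_ll {a C C' F L : ℝ} (ha : 0 < a) (hC : 1 ≤ C) (hC' : 0 ≤ C') (hF : 0 ≤ F)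
    (hL : 1 ≤ L) (hlog : Real.log (1 / a) ≤ C' * L) :
    ∫⁻ s in Ioo a (C * F), ENNReal.ofReal (1 / (s * (Real.log (Real.exp 1 + s) + L))) ≤
      ENNReal.ofReal ((C' + 4 * Real.log (2 + Real.log C) + 4) *
        (1 + lnp (Real.log (Real.exp 1 + F) / L))) := by
  have hlC : 0 ≤ Real.log C := Real.log_nonneg hC
  have hl2 : 0 ≤ Real.log (2 + Real.log C) := Real.log_nonneg (by linarith)
  set p := lnp (Real.log (Real.exp 1 + F) / L) with hp
  have hp0 : 0 ≤ p := lnp_nonneg _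
  have hlF := log_e_ge hF
  set φ := fun s => ENNReal.ofReal (1 / (s * (Real.log (Real.exp 1 + s) + L))) with hφ
  have h1 : ∫⁻ s in Ioc a 1, φ s ≤ ENNReal.ofReal C' := by
    refine (calc_a ha hL).trans (ENNReal.ofReal_le_ofReal ?_)
    rw [div_le_iff₀ (by linarith)]; exact hlog
  have h2 : ∫⁻ s in Ioc 1 (C * F), φ s ≤ ENNReal.ofReal (4 * (Real.log (2 + Real.log C) + p)) := by
    rcases le_or_gt 1 (C * F) with h | h
    · refine (calc_b h hL).trans (ENNReal.ofReal_le_ofReal ?_)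
      have e1 : Real.log (Real.exp 1 + C * F) ≤ Real.log C + Real.log (Real.exp 1 + F) := by
        rw [← Real.log_mul (by positivity) (by positivity)]
        apply Real.log_le_log (by positivity)
        nlinarith [Real.exp_pos 1]
      have e2 : Real.log (Real.exp 1 + C * F) + L ≤
          L * ((2 + Real.log C) * max 1 (Real.log (Real.exp 1 + F) / L)) := by
        have m1 := le_max_left 1 (Real.log (Real.exp 1 + F) / L)
        have m2 := le_max_right 1 (Real.log (Real.exp 1 + F) / L)
        set m := max 1 (Real.log (Real.exp 1 + F) / L)
        rw [div_le_iff₀ (by linarith)] at m2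
        have : L ≤ L * m := by nlinarith
        have : Real.log C ≤ L * m * Real.log C := by nlinarith
        nlinarith
      have e3 : Real.log (max 1 (Real.log (Real.exp 1 + F) / L)) ≤ p := by
        rw [hp, lnp]
        rcases le_total 1 (Real.log (Real.exp 1 + F) / L) with h | h
        · rw [max_eq_right h]; exact le_max_left _ _
        · rw [max_eq_left h]; simp
      have e4 : Real.log (Real.log (Real.exp 1 + C * F) + L) ≤
          Real.log L + (Real.log (2 + Real.log C) + p) := by
        have hq := log_e_ge (s := C * F) (by positivity)
        refine (Real.log_le_log (by positivity) e2).trans ?_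
        have m1 := le_max_left 1 (Real.log (Real.exp 1 + F) / L)
        rw [Real.log_mul (by positivity) (by positivity), Real.log_mul (by positivity) (by positivity)]
        linarith
      have e5 : Real.log L ≤ Real.log (Real.log (Real.exp 1 + 1) + L) := by
        have := log_e_ge zero_le_one
        apply Real.log_le_log (by positivity); linarith
      linarith
    · rw [Ioc_eq_empty (by linarith)]; simp
  calc ∫⁻ s in Ioo a (C * F), φ s ≤ ∫⁻ s in Ioc a 1 ∪ Ioc 1 (C * F), φ s := by
        refine lintegral_mono_set fun s hs => ?_
        rcases le_or_gt s 1 with h | h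
        · exact Or.inl ⟨hs.1, h⟩
        · exact Or.inr ⟨h, hs.2.le⟩
    _ ≤ _ := lintegral_union_le _ _ _
    _ ≤ _ := add_le_add h1 h2
    _ = ENNReal.ofReal (C' + 4 * (Real.log (2 + Real.log C) + p)) :=
        (ENNReal.ofReal_add hC' (by positivity)).symm
    _ ≤ _ := by
        refine ENNReal.ofReal_le_ofReal ?_
        nlinarith [mul_nonneg hC' hp0, mul_nonneg hl2 hp0]

theorem calc_lower_ll' {A F L : ℝ} (hA : 0 < A) (hF : 0 ≤ F) (hL : 1 ≤ L) :
    ENNReal.ofReal (1 + lnp (Real.log (Real.exp 1 + F) / L)) ≤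
      ENNReal.ofReal (1 + Real.log (1 + Real.log (Real.exp 1 + A))) +
      ∫⁻ s in Ioo A F, ENNReal.ofReal (1 / (s * (Real.log (Real.exp 1 + s) + L))) := by
  have hlA := log_e_ge hA.le
  have hlF := log_e_ge hF
  have hll : 0 ≤ Real.log (1 + Real.log (Real.exp 1 + A)) := Real.log_nonneg (by linarith)
  have key : lnp (Real.log (Real.exp 1 + F) / L) ≤ Real.log (1 + Real.log (Real.exp 1 + A)) +
      max 0 (Real.log (Real.log (Real.exp 1 + F) + L) - Real.log (Real.log (Real.exp 1 + A) + L)) := by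
    unfold lnp
    apply max_le
    · have e1 : Real.log (Real.log (Real.exp 1 + A) + L) ≤
          Real.log (1 + Real.log (Real.exp 1 + A)) + Real.log L := by
        rw [← Real.log_mul (by positivity) (by positivity)]
        apply Real.log_le_log (by positivity)
        nlinarith
      have e2 : Real.log (Real.log (Real.exp 1 + F)) ≤ Real.log (Real.log (Real.exp 1 + F) + L) :=
        Real.log_le_log (by positivity) (by linarith)
      rw [Real.log_div (by positivity) (by positivity)]
      have := le_max_right 0 (Real.log (Real.log (Real.exp 1 + F) + L) - Real.log (Real.log (Real.exp 1 + A) + L))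
      linarith
    · positivity
  rw [restrict_Ioo_eq_restrict_Ioc]
  rcases le_or_gt A F with h | h
  · refine le_trans ?_ (add_le_add_right (calc_lower_ll hA h hL) _)
    rw [max_eq_right] at key
    · rw [← ENNReal.ofReal_add (by positivity)]
      · exact ENNReal.ofReal_le_ofReal (by linarith)
      · have := Real.log_le_log (x := Real.log (Real.exp 1 + A) + L) (y := Real.log (Real.exp 1 + F) + L) (by positivity) (by gcongr)
        linarith
    · have := Real.log_le_log (x := Real.log (Real.exp 1 + A) + L) (y := Real.log (Real.exp 1 + F) + L) (by positivity) (by gcongr)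
      linarith
  · refine le_add_right (ENNReal.ofReal_le_ofReal ?_)
    rw [max_eq_left] at key
    · linarith
    · have := Real.log_le_log (x := Real.log (Real.exp 1 + F) + L) (y := Real.log (Real.exp 1 + A) + L) (by positivity) (by gcongr)
      linarith

/-- the weight -/
def wt {n : ℕ} (s : ℝ) (x : En n) : ℝ≥0∞ :=
  ENNReal.ofReal (1 / (Real.log (Real.exp 1 + s) + Real.log (Real.exp 1 + ‖x‖)))

theorem wt_meas {n : ℕ} : Measurable (fun p : En n × ℝ => wt p.2 p.1) := by
  unfold wt
  fun_prop

theorem wt_comp {n : ℕ} {s : ℝ} (hs : 0 ≤ s) {y z : En n} (h : dist y z ≤ 6) :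
    wt s y ≤ 4 * wt s z := by
  unfold wt
  have h1 := log_e_ge hs
  have h2 := log_e_ge (norm_nonneg y)
  have h3 := log_e_ge (norm_nonneg z)
  have he := Real.exp_one_gt_d9
  have hn : ‖z‖ ≤ ‖y‖ + 6 := by
    rw [dist_eq_norm, norm_sub_rev] at h
    have := norm_add_le y (z - y)
    simp only [add_sub_cancel] at this
    linarith
  have hy := norm_nonneg y
  have e1 : Real.log (Real.exp 1 + ‖z‖) ≤ Real.log 4 + Real.log (Real.exp 1 + ‖y‖) := by
    rw [← Real.log_mul (by positivity) (by positivity)]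
    apply Real.log_le_log (by positivity)
    linarith
  have e2 : Real.log 4 ≤ 3 := by
    have := Real.log_le_sub_one_of_pos (show (0:ℝ) < 4 by norm_num)
    linarith
  rw [show (4 : ℝ≥0∞) = ENNReal.ofReal 4 by norm_num, ← ENNReal.ofReal_mul (by norm_num)]
  apply ENNReal.ofReal_le_ofReal
  rw [mul_one_div, div_le_div_iff₀ (by positivity) (by positivity)]
  linarith

theorem Mloc_eq {n : ℕ} {f : En n → ℝ} (hf : Integrable f) (x : En n) :
    Mloc n f x = (Me n (fun x => ENNReal.ofReal |f x|) x).toReal := by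
  have hfi : ∀ s : Set (En n), ∫⁻ y in s, ENNReal.ofReal |f y| = ENNReal.ofReal (∫ y in s, |f y|) := by
    intro s
    rw [ofReal_integral_eq_lintegral_ofReal hf.abs.integrableOn (.of_forall fun _ => abs_nonneg _)]
  unfold Mloc Me
  rw [ENNReal.toReal_iSup]
  · congr 1
    ext r
    have : 0 < (r : ℝ) := r.2.1
    rw [hfi, ENNReal.toReal_mul, ENNReal.toReal_ofReal (by positivity), ENNReal.toReal_ofReal]
    exact integral_nonneg fun _ => abs_nonneg _
  · intro r
    rw [hfi]
    exact ENNReal.mul_ne_top ENNReal.ofReal_ne_top ENNReal.ofReal_ne_top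

/-- threshold -/
def s0 {n : ℕ} (x : En n) : ℝ := ((1 + ‖x‖) ^ (n + 1))⁻¹

theorem s0_pos {n : ℕ} (x : En n) : 0 < s0 x := by unfold s0; positivity

theorem s0_meas {n : ℕ} : Measurable (s0 : En n → ℝ) := by unfold s0; fun_prop

theorem s0_int {n : ℕ} : ∫⁻ x : En n, ENNReal.ofReal (s0 x) < ⊤ := by
  have h := integrable_one_add_norm (E := En n) (μ := volume) (r := ((n + 1 : ℕ) : ℝ)) (by simp)
  have h2 : (fun x : En n => s0 x) = fun x => (1 + ‖x‖) ^ (-((n + 1 : ℕ) : ℝ)) := by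
    ext x
    rw [s0, Real.rpow_neg (by positivity), Real.rpow_natCast]
  rw [← h2] at h
  exact h.lintegral_lt_top

theorem s0_comp {n : ℕ} {y z : En n} (h : dist y z ≤ 6) : s0 z ≤ 7 ^ (n + 1) * s0 y := by
  unfold s0
  have hn : ‖y‖ ≤ ‖z‖ + 6 := by
    rw [dist_eq_norm] at h
    have := norm_add_le z (y - z)
    simp only [add_sub_cancel] at this
    linarith
  have hz := norm_nonneg z
  have : (1 + ‖y‖) ^ (n + 1) ≤ 7 ^ (n + 1) * (1 + ‖z‖) ^ (n + 1) := by
    rw [← mul_pow]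
    gcongr
    linarith
  rw [← div_eq_mul_inv, le_div_iff₀ (by positivity), inv_mul_le_iff₀ (by positivity)]
  linarith

theorem forward {n : ℕ} {f : En n → ℝ} (hfm : Measurable f) (hf : Integrable f)
    (h : ∫⁻ x, ENNReal.ofReal (|f x| *
        (1 + lnp (Real.log (Real.exp 1 + |f x|) / Real.log (Real.exp 1 + ‖x‖)))) < ⊤) :
    ∫⁻ x, ENNReal.ofReal (Psi n x (Mloc n f x)) < ⊤ := by
  have hv := vB_pos n
  set F : En n → ℝ≥0∞ := fun x => ENNReal.ofReal |f x| with hFdef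
  have hF : Measurable F := by fun_prop
  set S : Set (En n × ℝ) := {p | 0 < p.2 ∧ s0 p.1 < p.2 ∧ ENNReal.ofReal p.2 < Me n F p.1} with hS
  have hSm : MeasurableSet S := by
    refine (measurableSet_lt measurable_const measurable_snd).inter
      ((measurableSet_lt (s0_meas.comp measurable_fst) measurable_snd).inter
      (measurableSet_lt (by fun_prop) (Me_measurable.comp measurable_fst)))
  set H : En n → ℝ → ℝ≥0∞ := fun x s => S.indicator (fun p => wt p.2 p.1) (x, s) with hH
  have hHm : Measurable (Function.uncurry H) := wt_meas.indicator hSm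
  have step1 : ∀ x, ENNReal.ofReal (Psi n x (Mloc n f x)) ≤
      ENNReal.ofReal (s0 x) + ∫⁻ s, H x s := by
    intro x
    rw [Mloc_eq hf]
    set T := (Me n F x).toReal with hT
    have hL := log_e_ge (norm_nonneg x)
    refine (calc_lower_psi (L := Real.log (Real.exp 1 + ‖x‖)) ENNReal.toReal_nonneg hL).trans ?_
    calc ∫⁻ s in Ioo 0 T, ENNReal.ofReal (1 / (Real.log (Real.exp 1 + s) + Real.log (Real.exp 1 + ‖x‖)))
        = ∫⁻ s, (Ioo 0 T).indicator (fun s => wt s x) s := by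
          rw [lintegral_indicator measurableSet_Ioo]; rfl
      _ ≤ ∫⁻ s, ((Ioc 0 (s0 x)).indicator (fun _ => 1) s + H x s) := by
          refine lintegral_mono fun s => ?_
          by_cases hs : s ∈ Ioo 0 T
          · rw [indicator_of_mem hs]
            by_cases hs2 : s ≤ s0 x
            · rw [indicator_of_mem (show s ∈ Ioc 0 (s0 x) from ⟨hs.1, hs2⟩)]
              refine le_add_right ?_
              unfold wt
              rw [ENNReal.ofReal_le_one]
              have := log_e_ge hs.1.le
              rw [div_le_one (by positivity)]
              linarith
            · refine le_add_left ?_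
              have : (x, s) ∈ S := by
                refine ⟨hs.1, not_le.1 hs2, ?_⟩
                refine lt_of_lt_of_le ?_ (ENNReal.ofReal_toReal_le (a := Me n F x))
                exact (ENNReal.ofReal_lt_ofReal_iff (hs.1.trans hs.2)).2 hs.2
              simp only [hH]
              rw [indicator_of_mem this]
          · rw [indicator_of_notMem hs]; exact zero_le
      _ = _ := by
          rw [lintegral_add_left (measurable_const.indicator measurableSet_Ioc),
            lintegral_indicator measurableSet_Ioc, setLIntegral_one, Real.volume_Ioc, sub_zero]
  set C : ℝ := max 1 (2 * vB n) with hC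
  set D : ℝ := 2 * 5 ^ n * vB n with hD
  set a : En n → ℝ := fun x => s0 x / 7 ^ (n + 1) with ha
  set S2 : Set (En n × ℝ) := {p | a p.1 < p.2 ∧ p.2 < C * |f p.1|} with hS2
  have hS2m : MeasurableSet S2 := by
    have := s0_meas (n := n)
    refine (measurableSet_lt (by fun_prop) measurable_snd).inter
      (measurableSet_lt measurable_snd (by fun_prop))
  set G : En n → ℝ → ℝ≥0∞ := fun x s => (4 * ENNReal.ofReal D * F x) *
    S2.indicator (fun p => ENNReal.ofReal (1 / (p.2 * (Real.log (Real.exp 1 + p.2) +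
      Real.log (Real.exp 1 + ‖p.1‖))))) (x, s) with hG
  have hGm : Measurable (Function.uncurry G) := by
    refine Measurable.mul (by fun_prop) (Measurable.indicator (by fun_prop) hS2m)
  have step2 : ∀ s, ∫⁻ x, H x s ≤ ∫⁻ x, G x s := by
    intro s
    rcases le_or_gt s 0 with hs | hs
    · have : ∀ x, H x s = 0 := fun x => indicator_of_notMem (fun h => absurd h.1 (not_lt.2 hs)) _
      simp [this]
    have hw := weak_lem hF hs ({x | s0 x < s}.indicator (wt s))
      ({x | s0 x < 7 ^ (n + 1) * s}.indicator (wt s)) 4 (by norm_num) ?_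
    · calc ∫⁻ x, H x s = ∫⁻ x in {x | ENNReal.ofReal s < Me n F x}, {x | s0 x < s}.indicator (wt s) x := by
            rw [← lintegral_indicator (measurableSet_lt measurable_const Me_measurable)]
            refine lintegral_congr fun x => ?_
            simp only [hH, indicator_apply, hS, mem_ofPred_eq, hs, true_and]
            split_ifs <;> first | rfl | tauto
        _ ≤ _ := hw
        _ = ∫⁻ x, 4 * ((ENNReal.ofReal (2 * 5 ^ n * vB n / s) *
          {y | ENNReal.ofReal (s / (2 * vB n)) < F y}.indicator F x) *
            ({x | s0 x < 7 ^ (n + 1) * s}.indicator (wt s)) x) :=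
            (lintegral_const_mul' _ _ (by norm_num)).symm
        _ ≤ _ := by
            refine lintegral_mono fun x => ?_
            by_cases h1 : ENNReal.ofReal (s / (2 * vB n)) < F x
            swap
            · rw [indicator_of_notMem (by exact h1)]; simp
            by_cases h2 : s0 x < 7 ^ (n + 1) * s
            swap
            · rw [indicator_of_notMem (s := {x | s0 x < 7 ^ (n + 1) * s}) (by exact h2)]; simp
            have hmem : (x, s) ∈ S2 := by
              constructor
              · change s0 x / 7 ^ (n + 1) < s
                rw [div_lt_iff₀ (by positivity)]; linarith
              · change s < C * |f x|
                have h3 : s / (2 * vB n) < |f x| := (ENNReal.ofReal_lt_ofReal_iff_of_nonneg (by positivity)).1 h1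
                rw [div_lt_iff₀ (by positivity)] at h3
                have := le_max_right 1 (2 * vB n)
                nlinarith [abs_nonneg (f x)]
            simp only [hG]
            rw [indicator_of_mem (by exact h1), indicator_of_mem (s := {x | s0 x < 7 ^ (n + 1) * s}) (by exact h2),
              indicator_of_mem hmem]
            have hL := log_e_ge (norm_nonneg x)
            have hls := log_e_ge hs.le
            have e : ENNReal.ofReal (2 * 5 ^ n * vB n / s) * wt s x = ENNReal.ofReal D *
              ENNReal.ofReal (1 / (s * (Real.log (Real.exp 1 + s) + Real.log (Real.exp 1 + ‖x‖)))) := by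
              unfold wt
              rw [← ENNReal.ofReal_mul (by positivity), ← ENNReal.ofReal_mul (by positivity)]
              congr 1
              field_simp
              exact hD.symm
            apply le_of_eq
            calc _ = 4 * F x * (ENNReal.ofReal (2 * 5 ^ n * vB n / s) * wt s x) := by ring
              _ = _ := by rw [e]; ring
    · intro y z hyz
      by_cases h1 : s0 y < s
      · rw [indicator_of_mem (by exact h1), indicator_of_mem]
        · exact wt_comp hs.le hyz
        · change s0 z < _
          have := s0_comp hyz
          have : (7:ℝ) ^ (n + 1) * s0 y < 7 ^ (n + 1) * s := by gcongr
          linarith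
      · rw [indicator_of_notMem (by exact h1)]; exact zero_le
  set C' : ℝ := 8 * ((n : ℝ) + 1)
  set Q : ℝ := C' + 4 * Real.log (2 + Real.log C) + 4
  have step3 : ∀ x, ∫⁻ s, G x s ≤ (4 * ENNReal.ofReal D * ENNReal.ofReal Q) * ENNReal.ofReal (|f x| *
        (1 + lnp (Real.log (Real.exp 1 + |f x|) / Real.log (Real.exp 1 + ‖x‖)))) := by
    intro x
    have hL := log_e_ge (norm_nonneg x)
    have hx := norm_nonneg x
    have hC1 : 1 ≤ C := le_max_left _ _
    have hQ : 0 ≤ Q := by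
      have hlC : 0 ≤ Real.log C := Real.log_nonneg hC1
      have hl2 : 0 ≤ Real.log (2 + Real.log C) := Real.log_nonneg (by linarith)
      positivity
    have hlog : Real.log (1 / a x) ≤ C' * Real.log (Real.exp 1 + ‖x‖) := by
      have : 1 / a x = (7 * (1 + ‖x‖)) ^ (n + 1) := by
        simp only [ha, s0]
        rw [mul_pow]; field_simp
      rw [this, Real.log_pow, Real.log_mul (by positivity) (by positivity)]
      have e1 := Real.log_le_sub_one_of_pos (show (0:ℝ) < 7 by norm_num)
      have e2 : Real.log (1 + ‖x‖) ≤ Real.log (Real.exp 1 + ‖x‖) := by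
        apply Real.log_le_log (by positivity)
        have := Real.exp_one_gt_d9
        linarith
      push_cast
      have : Real.log 7 + Real.log (1 + ‖x‖) ≤ 8 * Real.log (Real.exp 1 + ‖x‖) := by linarith
      calc _ ≤ ((n : ℝ) + 1) * (8 * Real.log (Real.exp 1 + ‖x‖)) := by gcongr
        _ = _ := by ring
    have hm : ∀ s, S2.indicator (fun p => ENNReal.ofReal (1 / (p.2 * (Real.log (Real.exp 1 + p.2) +
      Real.log (Real.exp 1 + ‖p.1‖))))) (x, s) = (Ioo (a x) (C * |f x|)).indicator (fun s =>
        ENNReal.ofReal (1 / (s * (Real.log (Real.exp 1 + s) + Real.log (Real.exp 1 + ‖x‖))))) s := by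
      intro s
      simp only [indicator_apply, hS2, mem_ofPred_eq, mem_Ioo]
    have hax : 0 < a x := div_pos (s0_pos x) (by positivity)
    simp only [hG, hm]
    rw [lintegral_const_mul' _ _ (ENNReal.mul_ne_top (ENNReal.mul_ne_top (by norm_num) ENNReal.ofReal_ne_top) ENNReal.ofReal_ne_top),
      lintegral_indicator measurableSet_Ioo]
    calc _ ≤ 4 * ENNReal.ofReal D * F x * ENNReal.ofReal (Q *
        (1 + lnp (Real.log (Real.exp 1 + |f x|) / Real.log (Real.exp 1 + ‖x‖)))) :=
          mul_le_mul_right (calc_upper_ll hax hC1 (by positivity) (abs_nonneg _) hL hlog) _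
      _ = _ := by
        rw [ENNReal.ofReal_mul hQ, ENNReal.ofReal_mul (abs_nonneg _)]
        ring
  calc ∫⁻ x, ENNReal.ofReal (Psi n x (Mloc n f x))
      ≤ ∫⁻ x, (ENNReal.ofReal (s0 x) + ∫⁻ s, H x s) := lintegral_mono step1
    _ = (∫⁻ x : En n, ENNReal.ofReal (s0 x)) + ∫⁻ x, ∫⁻ s, H x s :=
        lintegral_add_left (by have := s0_meas (n := n); fun_prop) _
    _ = (∫⁻ x : En n, ENNReal.ofReal (s0 x)) + ∫⁻ s, ∫⁻ x, H x s := by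
        rw [lintegral_lintegral_swap hHm.aemeasurable]
    _ ≤ (∫⁻ x : En n, ENNReal.ofReal (s0 x)) + ∫⁻ s, ∫⁻ x, G x s :=
        add_le_add_right (lintegral_mono step2) _
    _ = (∫⁻ x : En n, ENNReal.ofReal (s0 x)) + ∫⁻ x, ∫⁻ s, G x s := by
        rw [lintegral_lintegral_swap hGm.aemeasurable]
    _ ≤ (∫⁻ x : En n, ENNReal.ofReal (s0 x)) + ∫⁻ x, (4 * ENNReal.ofReal D * ENNReal.ofReal Q) * ENNReal.ofReal (|f x| *
        (1 + lnp (Real.log (Real.exp 1 + |f x|) / Real.log (Real.exp 1 + ‖x‖)))) :=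
        add_le_add_right (lintegral_mono step3) _
    _ < ⊤ := by
        rw [lintegral_const_mul' _ _ (ENNReal.mul_ne_top (ENNReal.mul_ne_top (by norm_num) ENNReal.ofReal_ne_top) ENNReal.ofReal_ne_top)]
        refine ENNReal.add_lt_top.2 ⟨s0_int, ENNReal.mul_lt_top (ENNReal.mul_lt_top (ENNReal.mul_lt_top (by norm_num) ENNReal.ofReal_lt_top) ENNReal.ofReal_lt_top) h⟩

theorem rev_lem {n : ℕ} {F : En n → ℝ≥0∞} (hF : Measurable F) {s : ℝ} (hs : 0 < s)
    (hI : ∫⁻ x, F x ≤ ENNReal.ofReal (vB n * s / 5 ^ n)) :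
    ∫⁻ x in {x | ENNReal.ofReal s < F x}, F x * wt s x ≤
      4 * ∫⁻ x, (ENNReal.ofReal (5 ^ n * s) *
        {y | ENNReal.ofReal (vB n / 3 ^ n * s) ≤ Me n F y}.indicator (fun _ => 1) x) * wt s x := by
  have hv := vB_pos n
  have hIfin : ∫⁻ x, F x ≠ ⊤ := ne_top_of_le_ne_top ENNReal.ofReal_ne_top hI
  set ρ := (volume : Measure (En n)).withDensity F with hρ
  have : IsFiniteMeasure ρ := isFiniteMeasure_withDensity hIfin
  have hρs : ∀ x r, ρ (closedBall x r) = ∫⁻ y in closedBall x r, F y := fun x r =>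
    withDensity_apply _ measurableSet_closedBall
  set S := {y | ENNReal.ofReal (vB n / 3 ^ n * s) ≤ Me n F y} with hS
  have hSm : MeasurableSet S := measurableSet_le measurable_const Me_measurable
  set rk : ℕ → ℝ := fun k => (1 / 5) ^ (k + 1) with hrk
  have hrk0 : ∀ k, 0 < rk k := fun k => by positivity
  have hlim : Filter.Tendsto rk Filter.atTop (nhdsWithin 0 (Ioi 0)) := by
    refine tendsto_nhdsWithin_iff.2 ⟨?_, .of_forall hrk0⟩
    exact (_root_.tendsto_pow_atTop_nhds_zero_of_lt_one (by norm_num) (by norm_num)).comp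
      (Filter.tendsto_add_atTop_nat 1)
  -- stopping radius
  have hae : ∀ᵐ x : En n, ENNReal.ofReal s < F x → ∃ r : ℝ, 0 < r ∧ r ≤ 1 / 25 ∧
      ENNReal.ofReal (vB n * s * r ^ n) ≤ ∫⁻ y in closedBall x r, F y ∧
      ∫⁻ y in closedBall x (5 * r), F y ≤ ENNReal.ofReal (vB n * s * (5 * r) ^ n) := by
    filter_upwards [Besicovitch.ae_tendsto_rnDeriv ρ volume,
      Measure.rnDeriv_withDensity volume hF] with x hx1 hx2 hx3
    rw [hx2] at hx1
    have h1 := (hx1.comp hlim).eventually (lt_mem_nhds hx3)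
    have hex : ∃ k, ENNReal.ofReal (vB n * s * rk k ^ n) < ∫⁻ y in closedBall x (rk k), F y := by
      obtain ⟨k, hk⟩ := h1.exists
      refine ⟨k, ?_⟩
      have hp : 0 < vB n * rk k ^ n := by have := hrk0 k; positivity
      simp only [Function.comp, hρs] at hk
      rw [vol_cb x (hrk0 k).le, ENNReal.lt_div_iff_mul_lt (Or.inl (by simpa using hp)) (Or.inl (by simp)),
        ← ENNReal.ofReal_mul hs.le] at hk
      convert hk using 2
      ring
    classical
    set k := Nat.find hex with hk
    have hk1 := Nat.find_spec hex
    have hk0 : k ≠ 0 := by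
      intro h0
      rw [← hk, h0] at hk1
      refine absurd hk1 (not_lt.2 ((setLIntegral_le_lintegral _ _).trans (hI.trans ?_)))
      apply ENNReal.ofReal_le_ofReal
      simp [hrk, div_eq_mul_inv]
    obtain ⟨j, hj⟩ := Nat.exists_eq_succ_of_ne_zero hk0
    have hj1 := not_lt.1 (Nat.find_min hex (m := j) (by omega))
    have h5 : 5 * rk k = rk j := by
      simp only [hrk, hj, Nat.succ_eq_add_one]; ring
    refine ⟨rk k, hrk0 k, ?_, hk1.le, ?_⟩
    · have : rk j ≤ 1 / 5 := by
        simp only [hrk]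
        rw [pow_succ]
        have : (1 / 5 : ℝ) ^ j ≤ 1 := pow_le_one₀ (by norm_num) (by norm_num)
        linarith
      linarith
    · rw [h5]; exact hj1
  set E := {x | ENNReal.ofReal s < F x ∧ ∃ r : ℝ, 0 < r ∧ r ≤ 1 / 25 ∧
      ENNReal.ofReal (vB n * s * r ^ n) ≤ ∫⁻ y in closedBall x r, F y ∧
      ∫⁻ y in closedBall x (5 * r), F y ≤ ENNReal.ofReal (vB n * s * (5 * r) ^ n)} with hE
  have hEeq : {x | ENNReal.ofReal s < F x} =ᵐ[volume] E := by
    filter_upwards [hae] with x hx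
    apply propext
    exact ⟨fun h => ⟨h, hx h⟩, fun h => h.1⟩
  rw [setLIntegral_congr hEeq]
  have hex : ∀ x, ∃ r : ℝ, x ∈ E → 0 < r ∧ r ≤ 1 / 25 ∧
      ENNReal.ofReal (vB n * s * r ^ n) ≤ ∫⁻ y in closedBall x r, F y ∧
      ∫⁻ y in closedBall x (5 * r), F y ≤ ENNReal.ofReal (vB n * s * (5 * r) ^ n) := by
    intro x
    by_cases hx : x ∈ E
    · obtain ⟨r, hr⟩ := hx.2
      exact ⟨r, fun _ => hr⟩
    · exact ⟨0, fun h => absurd h hx⟩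
  choose r hr using hex
  refine cover_lem F (fun x => ENNReal.ofReal (5 ^ n * s) * S.indicator (fun _ => 1) x) (wt s) (wt s)
    hF ((measurable_const.indicator hSm).const_mul _) 4 (by norm_num)
    (fun y z h => wt_comp hs.le h) E r (fun x hx => ⟨(hr x hx).1, by linarith [(hr x hx).2.1]⟩) ?_
  intro x hx
  obtain ⟨h0, h1, h2, h3⟩ := hr x hx
  have hsub : closedBall x (r x) ⊆ S := by
    intro z hz
    change _ ≤ Me n F z
    unfold Me
    refine le_trans ?_ (le_iSup _ (⟨3 * r x, by positivity, by linarith⟩ : Ioo (0:ℝ) 1))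
    calc ENNReal.ofReal (vB n / 3 ^ n * s)
        = ENNReal.ofReal (((3 * r x) ^ n)⁻¹) * ENNReal.ofReal (vB n * s * r x ^ n) := by
          rw [← ENNReal.ofReal_mul (by positivity)]
          congr 1
          rw [mul_pow]; field_simp
      _ ≤ _ := by
          refine mul_le_mul_right (h2.trans (lintegral_mono_set ?_)) _
          intro y hy
          have e1 := mem_closedBall.1 hz
          have e2 := mem_closedBall.1 hy
          have := dist_triangle_right y z x
          rw [mem_ball]
          change _ < 3 * r x
          linarith
  refine h3.trans (le_of_eq ?_)
  rw [lintegral_const_mul _ (measurable_const.indicator hSm)]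
  have : ∫⁻ y in closedBall x (r x), S.indicator (fun _ => (1 : ℝ≥0∞)) y = volume (closedBall x (r x)) := by
    rw [← setLIntegral_one]
    exact setLIntegral_congr_fun measurableSet_closedBall fun y hy => indicator_of_mem (hsub hy) _
  rw [this, vol_cb x h0.le, ← ENNReal.ofReal_mul (by positivity)]
  congr 1
  rw [mul_pow]; ring

theorem backward {n : ℕ} {f : En n → ℝ} (hfm : Measurable f) (hf : Integrable f)
    (h : ∫⁻ x, ENNReal.ofReal (Psi n x (Mloc n f x)) < ⊤) :
    ∫⁻ x, ENNReal.ofReal (|f x| *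
        (1 + lnp (Real.log (Real.exp 1 + |f x|) / Real.log (Real.exp 1 + ‖x‖)))) < ⊤ := by
  have hv := vB_pos n
  set F : En n → ℝ≥0∞ := fun x => ENNReal.ofReal |f x| with hFdef
  have hF : Measurable F := by fun_prop
  have hFI : ∫⁻ x, F x = ENNReal.ofReal (∫ x, |f x|) :=
    (ofReal_integral_eq_lintegral_ofReal hf.abs (.of_forall fun _ => abs_nonneg _)).symm
  have hI0 : 0 ≤ ∫ x, |f x| := integral_nonneg fun _ => abs_nonneg _
  set A : ℝ := 1 + 5 ^ n * (∫ x, |f x|) / vB n with hA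
  have hA0 : 0 < A := by positivity
  set c : ℝ := min 1 (vB n / 3 ^ n) with hc
  have hc0 : 0 < c := lt_min one_pos (by positivity)
  have hc1 : c ≤ 1 := min_le_left _ _
  set S : Set (En n × ℝ) := {p | A < p.2 ∧ p.2 < |f p.1|} with hS
  have hSm : MeasurableSet S := (measurableSet_lt measurable_const measurable_snd).inter
      (measurableSet_lt measurable_snd (by fun_prop))
  set H : En n → ℝ → ℝ≥0∞ := fun x s => F x * S.indicator (fun p =>
    ENNReal.ofReal (1 / (p.2 * (Real.log (Real.exp 1 + p.2) + Real.log (Real.exp 1 + ‖p.1‖))))) (x, s) with hH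
  have hHm : Measurable (Function.uncurry H) :=
    Measurable.mul (by fun_prop) (Measurable.indicator (by fun_prop) hSm)
  set S2 : Set (En n × ℝ) := {p | A < p.2 ∧ ENNReal.ofReal (c * p.2) ≤ Me n F p.1} with hS2
  have hS2m : MeasurableSet S2 := (measurableSet_lt measurable_const measurable_snd).inter
      (measurableSet_le (by fun_prop) (Me_measurable.comp measurable_fst))
  set G : En n → ℝ → ℝ≥0∞ := fun x s => (4 * 5 ^ n) * S2.indicator (fun p => wt p.2 p.1) (x, s) with hG
  have hGm : Measurable (Function.uncurry G) := (wt_meas.indicator hS2m).const_mul _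
  have step1 : ∀ x, ENNReal.ofReal (|f x| *
        (1 + lnp (Real.log (Real.exp 1 + |f x|) / Real.log (Real.exp 1 + ‖x‖)))) ≤
      ENNReal.ofReal (1 + Real.log (1 + Real.log (Real.exp 1 + A))) * F x + ∫⁻ s, H x s := by
    intro x
    have hL := log_e_ge (norm_nonneg x)
    have hm : ∀ s, S.indicator (fun p => ENNReal.ofReal (1 / (p.2 * (Real.log (Real.exp 1 + p.2) +
      Real.log (Real.exp 1 + ‖p.1‖))))) (x, s) = (Ioo A |f x|).indicator (fun s =>
        ENNReal.ofReal (1 / (s * (Real.log (Real.exp 1 + s) + Real.log (Real.exp 1 + ‖x‖))))) s := by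
      intro s
      simp only [indicator_apply, hS, mem_ofPred_eq, mem_Ioo]
    simp only [hH, hm]
    rw [lintegral_const_mul' _ _ ENNReal.ofReal_ne_top, lintegral_indicator measurableSet_Ioo,
      ENNReal.ofReal_mul (abs_nonneg _)]
    calc _ ≤ F x * _ := mul_le_mul_right (calc_lower_ll' hA0 (abs_nonneg (f x)) hL) _
      _ = _ := by rw [mul_add]; congr 1; ring
  have step2 : ∀ s, ∫⁻ x, H x s ≤ ∫⁻ x, G x s := by
    intro s
    rcases le_or_gt s A with hs | hs
    · have : ∀ x, H x s = 0 := fun x => by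
        simp only [hH]
        rw [indicator_of_notMem (fun h => absurd h.1 (not_lt.2 hs)), mul_zero]
      simp [this]
    have hs0 : 0 < s := hA0.trans hs
    have hr := rev_lem hF hs0 (by
      rw [hFI]
      apply ENNReal.ofReal_le_ofReal
      have : 5 ^ n * (∫ x, |f x|) / vB n ≤ s := by linarith
      rw [div_le_iff₀ hv] at this
      rw [le_div_iff₀ (by positivity)]
      linarith)
    have hls := log_e_ge hs0.le
    calc ∫⁻ x, H x s = ∫⁻ x, ENNReal.ofReal (1 / s) *
          {x | ENNReal.ofReal s < F x}.indicator (fun x => F x * wt s x) x := by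
          refine lintegral_congr fun x => ?_
          have hL := log_e_ge (norm_nonneg x)
          have hiff : ENNReal.ofReal s < F x ↔ s < |f x| :=
            ENNReal.ofReal_lt_ofReal_iff_of_nonneg hs0.le
          simp only [hH, indicator_apply, hS, mem_ofPred_eq, hiff, hs, true_and]
          split_ifs
          · unfold wt
            rw [mul_left_comm (ENNReal.ofReal (1 / s)), ← ENNReal.ofReal_mul (p := 1 / s) (by positivity)]
            congr 2
            field_simp
          · simp
      _ = ENNReal.ofReal (1 / s) * ∫⁻ x in {x | ENNReal.ofReal s < F x}, F x * wt s x := by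
          rw [lintegral_const_mul' _ _ ENNReal.ofReal_ne_top,
            lintegral_indicator (measurableSet_lt measurable_const hF)]
      _ ≤ _ := mul_le_mul_right hr _
      _ = ∫⁻ x, ENNReal.ofReal (1 / s) * (4 * ((ENNReal.ofReal (5 ^ n * s) *
        {y | ENNReal.ofReal (vB n / 3 ^ n * s) ≤ Me n F y}.indicator (fun _ => 1) x) * wt s x)) := by
          rw [← lintegral_const_mul' _ _ (by norm_num), ← lintegral_const_mul' _ _ ENNReal.ofReal_ne_top]
      _ ≤ _ := by
          refine lintegral_mono fun x => ?_
          by_cases h1 : ENNReal.ofReal (vB n / 3 ^ n * s) ≤ Me n F x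
          · have hmem : (x, s) ∈ S2 := by
              refine ⟨hs, le_trans (ENNReal.ofReal_le_ofReal ?_) h1⟩
              change c * s ≤ _
              gcongr
              exact min_le_right _ _
            simp only [hG]
            rw [indicator_of_mem hmem, indicator_of_mem (by exact h1)]
            apply le_of_eq
            have e : ENNReal.ofReal (1 / s) * ENNReal.ofReal (5 ^ n * s) = 5 ^ n := by
              rw [← ENNReal.ofReal_mul (by positivity), show 1 / s * (5 ^ n * s) = 5 ^ n by field_simp,
                ENNReal.ofReal_pow (by norm_num)]
              norm_num
            calc _ = 4 * (ENNReal.ofReal (1 / s) * ENNReal.ofReal (5 ^ n * s)) * wt s x := by ring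
              _ = _ := by rw [e]
          · rw [indicator_of_notMem (by exact h1)]; simp
  have step3 : ∀ᵐ x, ∫⁻ s, G x s ≤ (4 * 5 ^ n * ENNReal.ofReal (2 / c)) *
      ENNReal.ofReal (Psi n x (Mloc n f x)) := by
    filter_upwards [Me_lt_top hF (by rw [hFI]; exact ENNReal.ofReal_ne_top)] with x hx
    have hL := log_e_ge (norm_nonneg x)
    simp only [hG]
    rw [lintegral_const_mul' _ _ (by finiteness), mul_assoc (4 * 5 ^ n) (ENNReal.ofReal (2 / c))]
    refine mul_le_mul_right ?_ _
    rw [Mloc_eq hf]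
    set T := (Me n F x).toReal with hT
    have hT0 : 0 ≤ T := ENNReal.toReal_nonneg
    have hlT := log_e_ge hT0
    calc ∫⁻ s, S2.indicator (fun p => wt p.2 p.1) (x, s)
        ≤ ∫⁻ s, (Ioc 0 (T / c)).indicator (fun s => wt s x) s := by
          refine lintegral_mono fun s => ?_
          by_cases hs : (x, s) ∈ S2
          · have hs0 : 0 < s := hA0.trans hs.1
            have hmem : s ∈ Ioc 0 (T / c) := by
              refine ⟨hs0, ?_⟩
              rw [le_div_iff₀ hc0, mul_comm]
              exact (ENNReal.ofReal_le_iff_le_toReal hx.ne).1 hs.2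
            rw [indicator_of_mem hs, indicator_of_mem hmem]
          · rw [indicator_of_notMem hs]; exact zero_le
      _ = ∫⁻ s in Ioc 0 (T / c), wt s x := lintegral_indicator measurableSet_Ioc _
      _ ≤ ENNReal.ofReal (2 * ((T / c) / (Real.log (Real.exp 1 + T / c) + Real.log (Real.exp 1 + ‖x‖)))) :=
          calc_upper_psi (by positivity) hL
      _ ≤ _ := by
          rw [← ENNReal.ofReal_mul (by positivity)]
          apply ENNReal.ofReal_le_ofReal
          unfold Psi
          have hTc : T ≤ T / c := by
            rw [le_div_iff₀ hc0]; nlinarith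
          calc 2 * ((T / c) / (Real.log (Real.exp 1 + T / c) + Real.log (Real.exp 1 + ‖x‖)))
              ≤ 2 * ((T / c) / (Real.log (Real.exp 1 + T) + Real.log (Real.exp 1 + ‖x‖))) := by
                gcongr
            _ = _ := by field_simp
  calc _ ≤ ∫⁻ x, (ENNReal.ofReal (1 + Real.log (1 + Real.log (Real.exp 1 + A))) * F x + ∫⁻ s, H x s) :=
        lintegral_mono step1
    _ = ENNReal.ofReal (1 + Real.log (1 + Real.log (Real.exp 1 + A))) * (∫⁻ x, F x) +
        ∫⁻ x, ∫⁻ s, H x s := by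
        rw [lintegral_add_left (hF.const_mul _), lintegral_const_mul _ hF]
    _ = ENNReal.ofReal (1 + Real.log (1 + Real.log (Real.exp 1 + A))) * (∫⁻ x, F x) +
        ∫⁻ s, ∫⁻ x, H x s := by rw [lintegral_lintegral_swap hHm.aemeasurable]
    _ ≤ ENNReal.ofReal (1 + Real.log (1 + Real.log (Real.exp 1 + A))) * (∫⁻ x, F x) +
        ∫⁻ s, ∫⁻ x, G x s := add_le_add_right (lintegral_mono step2) _
    _ = ENNReal.ofReal (1 + Real.log (1 + Real.log (Real.exp 1 + A))) * (∫⁻ x, F x) +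
        ∫⁻ x, ∫⁻ s, G x s := by rw [lintegral_lintegral_swap hGm.aemeasurable]
    _ ≤ ENNReal.ofReal (1 + Real.log (1 + Real.log (Real.exp 1 + A))) * (∫⁻ x, F x) +
        ∫⁻ x, (4 * 5 ^ n * ENNReal.ofReal (2 / c)) * ENNReal.ofReal (Psi n x (Mloc n f x)) :=
        add_le_add_right (lintegral_mono_ae step3) _
    _ < ⊤ := by
        rw [lintegral_const_mul' _ _ (by finiteness), hFI]
        exact ENNReal.add_lt_top.2 ⟨by finiteness, ENNReal.mul_lt_top (by finiteness) h⟩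

/-- **Characterization of `M^loc f ∈ L_log(ℝ^n)` for integrable `f`.**
`∫ Ψ(x, M^loc f(x)) dx < ∞` iff
`∫ |f(x)| (1 + ln₊( ln(e+|f(x)|) / ln(e+|x|) )) dx < ∞`. -/
theorem local_stein_Llog (n : ℕ) (hn : 1 ≤ n) (f : En n → ℝ) (hf : Integrable f) :
    ∫⁻ x, ENNReal.ofReal (Psi n x (Mloc n f x)) < ⊤ ↔
      ∫⁻ x, ENNReal.ofReal (|f x| *
        (1 + lnp (Real.log (Real.exp 1 + |f x|) / Real.log (Real.exp 1 + ‖x‖)))) < ⊤ := by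
  obtain ⟨g, hg, hfg⟩ := hf.1
  have hgm : Measurable g := hg.measurable
  have hgi : Integrable g := hf.congr hfg
  have hM : ∀ x, Mloc n f x = Mloc n g x := by
    intro x
    unfold Mloc
    congr 1
    ext r
    congr 1
    refine integral_congr_ae (ae_restrict_of_ae ?_)
    filter_upwards [hfg] with y hy
    rw [hy]
  have hR : ∫⁻ x, ENNReal.ofReal (|f x| *
        (1 + lnp (Real.log (Real.exp 1 + |f x|) / Real.log (Real.exp 1 + ‖x‖)))) =
      ∫⁻ x, ENNReal.ofReal (|g x| *
        (1 + lnp (Real.log (Real.exp 1 + |g x|) / Real.log (Real.exp 1 + ‖x‖)))) := by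
    refine lintegral_congr_ae ?_
    filter_upwards [hfg] with y hy
    rw [hy]
  simp only [hM]
  rw [hR]
  exact ⟨backward hgm hgi, forward hgm hgi⟩
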